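/- Let β < ω₁ and suppose that for every block subspace X ⊆ W there are K ≥ 1 and a block sequence (y_n) in X such that player II has a strategy in F^β_X to play outcomes (x_0,…,x_k) satisfying (x_0,…,x_k) ∼_K (y_0,…,y_k). Then there are K ≥ 1 and a block subspace Y ⊆ W such that for every block subspace X ⊆ Y there is a block sequence (y_n) in X such that II has a strategy in F^β_X to play outcomes (x_0,…,x_k) satisfying (x_0,…,x_k) ∼_K (y_0,…,y_k); i.e., the constant K can be chosen uniformly for all X ⊆ Y. -/

import Mathlib

open Filter Topology

namespace Rosendal

variable {𝒲 : Type} [NormedAddCommGroup 𝒲] [NormedSpace ℝ 𝒲]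

/-- `(e n)` is a Schauder basis of the Banach space `𝒲`. -/
def IsSchauderBasis (e : ℕ → 𝒲) : Prop :=
  ∀ x : 𝒲, ∃! a : ℕ → ℝ,
    Tendsto (fun N => ∑ i ∈ Finset.range N, a i • e i) atTop (𝓝 x)

/-- `x` is a linear combination of the vectors `b i`, `i ∈ s`. -/
def SuppIn (b : ℕ → 𝒲) (x : 𝒲) (s : Finset ℕ) : Prop :=
  ∃ a : ℕ → ℝ, x = ∑ i ∈ s, a i • b i

/-- `(x i)_{i<k} ∼_K (y i)_{i<k}`. -/
def SeqEquiv (K : ℝ) (k : ℕ) (x y : ℕ → 𝒲) : Prop :=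
  ∀ a : ℕ → ℝ,
    (1 / K) * ‖∑ i ∈ Finset.range k, a i • x i‖ ≤ ‖∑ i ∈ Finset.range k, a i • y i‖ ∧
    ‖∑ i ∈ Finset.range k, a i • y i‖ ≤ K * ‖∑ i ∈ Finset.range k, a i • x i‖

/-- The outcome `l = (x 0, …, x k)` satisfies `(x 0, …, x k) ∼_K (y 0, …, y k)`. -/
def OutcomeEquiv (K : ℝ) (l : List 𝒲) (y : ℕ → 𝒲) : Prop :=
  SeqEquiv K l.length (fun i => l.getD i 0) y

/-- The outcome `l = (u 0, v 0, u 1, v 1, …, u k, v k)` satisfies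
`(u 0, …, u k) ∼_K (v 0, …, v k)`. -/
def PairOutcomeEquiv (K : ℝ) (l : List 𝒲) : Prop :=
  SeqEquiv K (l.length / 2) (fun i => l.getD (2 * i) 0) (fun i => l.getD (2 * i + 1) 0)

/-- The tree `T((x n), Y, K)`. -/
def embTree (x : ℕ → 𝒲) (Y : Set 𝒲) (K : ℝ) : Set (List 𝒲) :=
  {l | (∀ v ∈ l, v ∈ Y) ∧ SeqEquiv K l.length (fun i => l.getD i 0) x}

open Classical in
/-- The rank of a tree of finite sequences; `⊤ = ∞` if it is ill-founded. -/
noncomputable def treeRank (T : Set (List 𝒲)) : WithTop Ordinal :=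
  if h : WellFounded (fun t s : T => s.val <+: t.val ∧ s.val ≠ t.val) then
    ((⨆ s : T, Order.succ ((h.apply s).rank) : Ordinal) : WithTop Ordinal)
  else ⊤

open Classical in
/-- The embeddability index `Emb((x n), Y) = sup_{K ≥ 1} rank T((x n), Y, K)`. -/
noncomputable def embIndex (x : ℕ → 𝒲) (Y : Set 𝒲) : WithTop Ordinal :=
  if ∃ K : ℝ, 1 ≤ K ∧ treeRank (embTree x Y K) = ⊤ then ⊤
  else ((sSup {o : Ordinal | ∃ K : ℝ, 1 ≤ K ∧
      (o : WithTop Ordinal) = treeRank (embTree x Y K)} : Ordinal) : WithTop Ordinal)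

/-- `(I m)` is a sequence of successive nonempty finite intervals `I 0 < I 1 < …` of `ℕ`. -/
def IntervalSeq (I : ℕ → Finset ℕ) : Prop :=
  (∀ m, ∃ a b : ℕ, a ≤ b ∧ I m = Finset.Icc a b) ∧
  ∀ m, ∀ i ∈ I m, ∀ j ∈ I (m + 1), i < j

/-- The setting of Section 2 of the paper: a Banach space `𝒲` with a Schauder basis
`(e n)`, a countable subfield `𝔽 ⊆ ℝ` closed under the norms of finite `𝔽`-linear
combinations of the basis, and the countable `𝔽`-vector space `W` spanned by `(e n)`. -/
structure Frame (𝒲 : Type) [NormedAddCommGroup 𝒲] [NormedSpace ℝ 𝒲] : Type where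
  e : ℕ → 𝒲
  complete : CompleteSpace 𝒲
  basis : IsSchauderBasis e
  𝔽 : Subfield ℝ
  countable : (𝔽 : Set ℝ).Countable
  norm_mem : ∀ (s : Finset ℕ) (a : ℕ → ℝ), (∀ i ∈ s, a i ∈ 𝔽) →
    ‖∑ i ∈ s, a i • e i‖ ∈ 𝔽

namespace Frame

variable {𝒲 : Type} [NormedAddCommGroup 𝒲] [NormedSpace ℝ 𝒲] (ctx : Frame 𝒲)

/-- The `𝔽`-linear span of a set of vectors. -/
def fspan (S : Set 𝒲) : Set 𝒲 :=
  {v | ∃ t : Finset 𝒲, ↑t ⊆ S ∧ ∃ c : 𝒲 → ℝ, (∀ w, c w ∈ ctx.𝔽) ∧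
    v = ∑ w ∈ t, c w • w}

/-- The countable `𝔽`-vector space `W` with basis `(e n)`. -/
def W : Set 𝒲 := ctx.fspan (Set.range ctx.e)

/-- `(y n)` is a block sequence with respect to the reference block basis `(b n)`:
a sequence of nonzero vectors of the `𝔽`-span of `(b n)` with successive supports. -/
def BlockSeqRel (b y : ℕ → 𝒲) : Prop :=
  (∀ n, y n ∈ ctx.fspan (Set.range b)) ∧ (∀ n, y n ≠ 0) ∧
  ∃ D : ℕ → Finset ℕ, (∀ n, SuppIn b (y n) (D n)) ∧
    ∀ n, ∀ i ∈ D n, ∀ j ∈ D (n + 1), i < j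

/-- `(y n)` is a block sequence (with respect to the basis `(e n)` of `W`). -/
def IsBlockSeq (y : ℕ → 𝒲) : Prop := ctx.BlockSeqRel ctx.e y

/-- `Y` is a block subspace of `X`: the `𝔽`-span of an infinite block sequence of
vectors of `X`. -/
def IsBlockSubspaceOf (Y X : Set 𝒲) : Prop :=
  ∃ y : ℕ → 𝒲, ctx.IsBlockSeq y ∧ (∀ n, y n ∈ X) ∧ Y = ctx.fspan (Set.range y)

/-- `Y` is a block subspace of `W`. -/
def IsBlockSubspace (Y : Set 𝒲) : Prop := ctx.IsBlockSubspaceOf Y ctx.W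

/-- `F` is a finite-dimensional `𝔽`-subspace of `X`. -/
def IsFinDimIn (F X : Set 𝒲) : Prop :=
  ∃ t : Finset 𝒲, ↑t ⊆ X ∧ F = ctx.fspan ↑t

/-- `n < F`: every vector of `F` is supported on basis vectors of index `> n`. -/
def NatLt (n : ℕ) (F : Set 𝒲) : Prop :=
  ∀ x ∈ F, ∃ s : Finset ℕ, SuppIn ctx.e x s ∧ ∀ i ∈ s, n < i

/-- `V` is an `𝔽`-subspace of `𝒲`. -/
def IsSubspace (V : Set 𝒲) : Prop :=
  (0 : 𝒲) ∈ V ∧ (∀ u v : 𝒲, u ∈ V → v ∈ V → u + v ∈ V) ∧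
    ∀ c : ℝ, c ∈ ctx.𝔽 → ∀ v ∈ V, c • v ∈ V

/-- `V` is infinite-dimensional (not contained in a finitely generated subspace). -/
def IsInfDim (V : Set 𝒲) : Prop :=
  ¬∃ t : Finset 𝒲, V ⊆ ctx.fspan ↑t

/-- Game values of the asymptotic game `F^β_X`, for player II, computed by transfinite
recursion on the ordinal bound.  `IIWinsF X S β Facc vec` states: in the asymptotic game
below `X`, from a position where the vectors `vec` have been played and the
finite-dimensional subspaces played by II span `Facc`, and where I must now play a natural
number together with an ordinal `< β`, player II has a strategy so that the final outcome
lies in `S`. -/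
noncomputable def IIWinsF (X : Set 𝒲) (S : Set (List 𝒲)) :
    Ordinal → Set 𝒲 → List 𝒲 → Prop :=
  WellFounded.fix (C := fun _ : Ordinal => Set 𝒲 → List 𝒲 → Prop) Ordinal.lt_wf
    (fun β ih Facc vec =>
      ∀ n : ℕ, ∀ ξ : Ordinal, ∀ hξ : ξ < β,
        ∃ F : Set 𝒲, ctx.IsFinDimIn F X ∧ ctx.NatLt n F ∧
          ∃ x : 𝒲, x ≠ 0 ∧ x ∈ ctx.fspan (Facc ∪ F) ∧
            (ξ = 0 → vec ++ [x] ∈ S) ∧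
            (ξ ≠ 0 → ih ξ hξ (ctx.fspan (Facc ∪ F)) (vec ++ [x])))

/-- Player II has a strategy in the asymptotic game `F^β_X` to play an outcome in `S`. -/
noncomputable def IIStratF (X : Set 𝒲) (β : Ordinal) (S : Set (List 𝒲)) : Prop :=
  (β = 0 → ([] : List 𝒲) ∈ S) ∧ (β ≠ 0 → ctx.IIWinsF X S β (ctx.fspan ∅) [])

/-- Game values of the asymptotic game `F^β_X` for player I (who plays the integers and
the ordinals, trying to steer the outcome into `S`). -/
noncomputable def IWinsF (X : Set 𝒲) (S : Set (List 𝒲)) :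
    Ordinal → Set 𝒲 → List 𝒲 → Prop :=
  WellFounded.fix (C := fun _ : Ordinal => Set 𝒲 → List 𝒲 → Prop) Ordinal.lt_wf
    (fun β ih Facc vec =>
      ∃ n : ℕ, ∃ ξ : Ordinal, ∃ hξ : ξ < β,
        ∀ F : Set 𝒲, ctx.IsFinDimIn F X → ctx.NatLt n F →
        ∀ x : 𝒲, x ≠ 0 → x ∈ ctx.fspan (Facc ∪ F) →
          (ξ = 0 → vec ++ [x] ∈ S) ∧
          (ξ ≠ 0 → ih ξ hξ (ctx.fspan (Facc ∪ F)) (vec ++ [x])))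

/-- Player I has a strategy in the asymptotic game `F^β_X` to play an outcome in `S`. -/
noncomputable def IStratF (X : Set 𝒲) (β : Ordinal) (S : Set (List 𝒲)) : Prop :=
  (β = 0 → ([] : List 𝒲) ∈ S) ∧ (β ≠ 0 → ctx.IWinsF X S β (ctx.fspan ∅) [])

/-- Game values of the Gowers game `G^α_X` for player II. -/
noncomputable def IIWinsG (X : Set 𝒲) (S : Set (List 𝒲)) :
    Ordinal → Set 𝒲 → List 𝒲 → Prop :=
  WellFounded.fix (C := fun _ : Ordinal => Set 𝒲 → List 𝒲 → Prop) Ordinal.lt_wf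
    (fun α ih Facc vec =>
      ∀ Y : Set 𝒲, ctx.IsBlockSubspaceOf Y X →
      ∀ ξ : Ordinal, ∀ hξ : ξ < α,
        ∃ F : Set 𝒲, ctx.IsFinDimIn F Y ∧
          ∃ x : 𝒲, x ≠ 0 ∧ x ∈ ctx.fspan (Facc ∪ F) ∧
            (ξ = 0 → vec ++ [x] ∈ S) ∧
            (ξ ≠ 0 → ih ξ hξ (ctx.fspan (Facc ∪ F)) (vec ++ [x])))

/-- Player II has a strategy in the generalised Gowers game `G^α_X` to play in `S`. -/
noncomputable def IIStratG (X : Set 𝒲) (α : Ordinal) (S : Set (List 𝒲)) : Prop :=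
  (α = 0 → ([] : List 𝒲) ∈ S) ∧ (α ≠ 0 → ctx.IIWinsG X S α (ctx.fspan ∅) [])

/-- Game values of the adversarial game `A^α_X` for player II (who plays the integers,
the finite-dimensional subspaces `F_l ⊆ Y_l` and the vectors `y_l`). -/
noncomputable def IIWinsA (X : Set 𝒲) (S : Set (List 𝒲)) :
    Ordinal → Set 𝒲 → Set 𝒲 → List 𝒲 → Prop :=
  WellFounded.fix (C := fun _ : Ordinal => Set 𝒲 → Set 𝒲 → List 𝒲 → Prop)
    Ordinal.lt_wf
    (fun α ih Eacc Facc vec =>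
      ∃ n : ℕ,
        ∀ E : Set 𝒲, ctx.IsFinDimIn E X → ctx.NatLt n E →
        ∀ x : 𝒲, x ≠ 0 → x ∈ ctx.fspan (Eacc ∪ E) →
        ∀ Y : Set 𝒲, ctx.IsBlockSubspaceOf Y X →
        ∀ ξ : Ordinal, ∀ hξ : ξ < α,
          ∃ F : Set 𝒲, ctx.IsFinDimIn F Y ∧
            ∃ y : 𝒲, y ≠ 0 ∧ y ∈ ctx.fspan (Facc ∪ F) ∧
              (ξ = 0 → vec ++ [x, y] ∈ S) ∧
              (ξ ≠ 0 → ih ξ hξ (ctx.fspan (Eacc ∪ E)) (ctx.fspan (Facc ∪ F))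
                (vec ++ [x, y])))

/-- Player II has a strategy in the adversarial game `A^α_X` to play in `S`. -/
noncomputable def IIStratA (X : Set 𝒲) (α : Ordinal) (S : Set (List 𝒲)) : Prop :=
  (α = 0 → ([] : List 𝒲) ∈ S) ∧
  (α ≠ 0 → ctx.IIWinsA X S α (ctx.fspan ∅) (ctx.fspan ∅) [])

/-- Game values of the adversarial game `B^α_X` for player I (who plays the
finite-dimensional subspaces `E_l ⊆ Y_l`, the vectors `x_l`, the integers and the
ordinals). -/
noncomputable def IWinsB (X : Set 𝒲) (S : Set (List 𝒲)) :
    Ordinal → Set 𝒲 → Set 𝒲 → List 𝒲 → Prop :=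
  WellFounded.fix (C := fun _ : Ordinal => Set 𝒲 → Set 𝒲 → List 𝒲 → Prop)
    Ordinal.lt_wf
    (fun α ih Eacc Facc vec =>
      ∀ Y : Set 𝒲, ctx.IsBlockSubspaceOf Y X →
        ∃ E : Set 𝒲, ctx.IsFinDimIn E Y ∧
          ∃ x : 𝒲, x ≠ 0 ∧ x ∈ ctx.fspan (Eacc ∪ E) ∧
            ∃ n : ℕ, ∃ ξ : Ordinal, ∃ hξ : ξ < α,
              ∀ F : Set 𝒲, ctx.IsFinDimIn F X → ctx.NatLt n F →
              ∀ y : 𝒲, y ≠ 0 → y ∈ ctx.fspan (Facc ∪ F) →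
                (ξ = 0 → vec ++ [x, y] ∈ S) ∧
                (ξ ≠ 0 → ih ξ hξ (ctx.fspan (Eacc ∪ E)) (ctx.fspan (Facc ∪ F))
                  (vec ++ [x, y])))

/-- Player I has a strategy in the adversarial game `B^α_X` to play in `S`. -/
noncomputable def IStratB (X : Set 𝒲) (α : Ordinal) (S : Set (List 𝒲)) : Prop :=
  (α = 0 → ([] : List 𝒲) ∈ S) ∧
  (α ≠ 0 → ctx.IWinsB X S α (ctx.fspan ∅) (ctx.fspan ∅) [])

/-- Game values of the adversarial game `B^α_X` for player II (who plays the block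
subspaces `Y_l`, the finite-dimensional subspaces `F_l` and the vectors `y_l`). -/
noncomputable def IIWinsB (X : Set 𝒲) (S : Set (List 𝒲)) :
    Ordinal → Set 𝒲 → Set 𝒲 → List 𝒲 → Prop :=
  WellFounded.fix (C := fun _ : Ordinal => Set 𝒲 → Set 𝒲 → List 𝒲 → Prop)
    Ordinal.lt_wf
    (fun α ih Eacc Facc vec =>
      ∃ Y : Set 𝒲, ctx.IsBlockSubspaceOf Y X ∧
        ∀ E : Set 𝒲, ctx.IsFinDimIn E Y →
        ∀ x : 𝒲, x ≠ 0 → x ∈ ctx.fspan (Eacc ∪ E) →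
        ∀ n : ℕ, ∀ ξ : Ordinal, ∀ hξ : ξ < α,
          ∃ F : Set 𝒲, ctx.IsFinDimIn F X ∧ ctx.NatLt n F ∧
            ∃ y : 𝒲, y ≠ 0 ∧ y ∈ ctx.fspan (Facc ∪ F) ∧
              (ξ = 0 → vec ++ [x, y] ∈ S) ∧
              (ξ ≠ 0 → ih ξ hξ (ctx.fspan (Eacc ∪ E)) (ctx.fspan (Facc ∪ F))
                (vec ++ [x, y])))

/-- Player II has a strategy in the adversarial game `B^α_X` to play in `S`. -/
noncomputable def IIStratB (X : Set 𝒲) (α : Ordinal) (S : Set (List 𝒲)) : Prop :=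
  (α = 0 → ([] : List 𝒲) ∈ S) ∧
  (α ≠ 0 → ctx.IIWinsB X S α (ctx.fspan ∅) (ctx.fspan ∅) [])

end Frame

end Rosendal

namespace Rosendal

/-
Suppose that the conclusion fails. Let `C` bound the norms of the partial sum projections of the
basis, and choose block subspaces `X_0 ⊇ X_1 ⊇ …` such that the constant `(n + 1) * (1 + 4 C n)`
does not work for `X_n`. Let `Z` be spanned by a block sequence `z` with `z_j ∈ X_n` for all
`j ≥ n`, and let `K` and `y` be provided by the hypothesis for `Z`; take `n ≥ K`. Only the first `n`
terms of `y` may fail to lie in `X_n`. Replacing them by vectors of `X_n` of the same norms costs a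
factor `1 + 4 C n` in equivalence, which depends on `n` but not on `y`, and a strategy of II in `Z`
yields one in `X_n`: pretending that I has played large numbers keeps its vectors in the span of
`(z_j)_{j ≥ n}`. So the constant `K * (1 + 4 C n)` does work for `X_n`, a contradiction.
-/

namespace IsSchauderBasis

variable {𝒲 : Type} [NormedAddCommGroup 𝒲] [NormedSpace ℝ 𝒲] {e : ℕ → 𝒲}
  (he : IsSchauderBasis e)

/-- The coefficients of a vector in its expansion along a Schauder basis, as a linear map. -/
noncomputable def coeff : 𝒲 →ₗ[ℝ] ℕ → ℝ where
  toFun x := (he x).exists.choose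
  map_add' x y := (he (x + y)).unique (he (x + y)).exists.choose_spec <| by
    simpa only [Pi.add_apply, add_smul, Finset.sum_add_distrib] using
      (he x).exists.choose_spec.add (he y).exists.choose_spec
  map_smul' c x := (he (c • x)).unique (he (c • x)).exists.choose_spec <| by
    simpa only [RingHom.id_apply, Pi.smul_apply, smul_assoc, Finset.smul_sum] using
      (he x).exists.choose_spec.const_smul c

theorem tendsto_sum_coeff (x : 𝒲) :
    Tendsto (fun N => ∑ i ∈ Finset.range N, he.coeff x i • e i) atTop (𝓝 x) :=
  (he x).exists.choose_spec

theorem coeff_eq_of_tendsto {a : ℕ → ℝ} {x : 𝒲}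
    (h : Tendsto (fun N => ∑ i ∈ Finset.range N, a i • e i) atTop (𝓝 x)) : he.coeff x = a :=
  (he x).unique (he.tendsto_sum_coeff x) h

theorem coeff_basis (j : ℕ) : he.coeff (e j) = Pi.single j 1 := by
  refine he.coeff_eq_of_tendsto (tendsto_const_nhds.congr' ?_)
  filter_upwards [eventually_gt_atTop j] with N hN
  simp [Pi.single_apply, hN]

theorem ne_zero (he : IsSchauderBasis e) (j : ℕ) : e j ≠ 0 := fun h0 => by
  simpa [h0] using congrFun (he.coeff_basis j) j

/-- The convergent sequence of partial sums of the expansion of a vector, together with its limit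
at `∞`, as a continuous function on the one-point compactification of `ℕ`: these functions form a
Banach space, to which the closed graph theorem applies. -/
noncomputable def partialSums : 𝒲 →ₗ[ℝ] C(OnePoint ℕ, 𝒲) where
  toFun x := OnePoint.continuousMapMkNat _ x (he.tendsto_sum_coeff x)
  map_add' x y := by
    ext t
    induction t using OnePoint.rec with
    | infty => rfl
    | coe N =>
      change ∑ i ∈ Finset.range N, he.coeff (x + y) i • e i =
        ∑ i ∈ Finset.range N, he.coeff x i • e i + ∑ i ∈ Finset.range N, he.coeff y i • e i
      simp only [map_add, Pi.add_apply, add_smul, Finset.sum_add_distrib]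
  map_smul' c x := by
    ext t
    induction t using OnePoint.rec with
    | infty => rfl
    | coe N =>
      change ∑ i ∈ Finset.range N, he.coeff (c • x) i • e i =
        c • ∑ i ∈ Finset.range N, he.coeff x i • e i
      simp only [map_smul, Pi.smul_apply, smul_assoc, Finset.smul_sum]

theorem partialSums_coe (x : 𝒲) (N : ℕ) :
    he.partialSums x (N : OnePoint ℕ) = ∑ i ∈ Finset.range N, he.coeff x i • e i := rfl

theorem partialSums_succ_sub (x : 𝒲) (N : ℕ) :
    he.partialSums x ((N + 1 : ℕ) : OnePoint ℕ) - he.partialSums x (N : OnePoint ℕ) =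
      he.coeff x N • e N := by
  rw [partialSums_coe, partialSums_coe, Finset.sum_range_succ, add_sub_cancel_left]

theorem eq_partialSums {f : C(OnePoint ℕ, 𝒲)} (h0 : f ((0 : ℕ) : OnePoint ℕ) = 0)
    (hf : ∀ N : ℕ, f ((N + 1 : ℕ) : OnePoint ℕ) - f (N : OnePoint ℕ) ∈
      Submodule.span ℝ {e N}) :
    f = he.partialSums (f OnePoint.infty) := by
  choose a ha using fun N => Submodule.mem_span_singleton.1 (hf N)
  have hsum (N : ℕ) : f (N : OnePoint ℕ) = ∑ i ∈ Finset.range N, a i • e i := by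
    simp only [ha, Finset.sum_range_sub (fun N : ℕ => f (N : OnePoint ℕ)), h0, sub_zero]
  have hcoeff : he.coeff (f OnePoint.infty) = a :=
    he.coeff_eq_of_tendsto <| ((OnePoint.continuous_iff_from_nat f).1 f.continuous).congr hsum
  ext t
  induction t using OnePoint.rec with
  | infty => rfl
  | coe N => rw [hsum, partialSums_coe, hcoeff]

variable [CompleteSpace 𝒲]

theorem continuous_partialSums : Continuous he.partialSums := by
  refine he.partialSums.continuous_of_seq_closed_graph fun u x f hu hf => ?_
  have heval (t : OnePoint ℕ) : Tendsto (fun n => he.partialSums (u n) t) atTop (𝓝 (f t)) :=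
    ((continuous_eval_const t).tendsto f).comp hf
  have hinfty : f OnePoint.infty = x := tendsto_nhds_unique (heval _) hu
  rw [← hinfty]
  refine he.eq_partialSums (tendsto_nhds_unique (heval _) ?_) fun N => ?_
  · simp only [partialSums_coe, Finset.sum_range_zero, tendsto_const_nhds]
  · refine (Submodule.closed_of_finiteDimensional (Submodule.span ℝ {e N})).mem_of_tendsto
      ((heval _).sub (heval _)) (Eventually.of_forall fun n => ?_)
    rw [partialSums_succ_sub]
    exact Submodule.smul_mem _ _ (Submodule.mem_span_singleton_self _)

theorem continuous_coeff (i : ℕ) : Continuous fun x => he.coeff x i := by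
  rw [(isClosedEmbedding_smul_left (he.ne_zero i)).isInducing.continuous_iff]
  refine (((continuous_eval_const ((i + 1 : ℕ) : OnePoint ℕ)).sub
    (continuous_eval_const (i : OnePoint ℕ))).comp
      he.continuous_partialSums).congr fun x => ?_
  exact he.partialSums_succ_sub x i

/-- A sequence with unique expansions in a Banach space, as a `SchauderBasis`: there the
coordinate functionals are automatically continuous. -/
noncomputable def toSchauderBasis : SchauderBasis ℝ 𝒲 where
  basis := e
  coord i := ⟨LinearMap.proj i ∘ₗ he.coeff, he.continuous_coeff i⟩
  ortho i j := by
    change he.coeff (e j) i = _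
    simp only [coeff_basis, Pi.single_apply]
    congr
  expansion x := by
    rw [HasSum, SummationFilter.conditional_filter_eq_map_range, tendsto_map'_iff]
    exact he.tendsto_sum_coeff x

end IsSchauderBasis

section SeqEquiv

variable {𝒲 : Type} [NormedAddCommGroup 𝒲] [NormedSpace ℝ 𝒲] {K L C : ℝ} {k m : ℕ}
  {x y z : ℕ → 𝒲}

theorem seqEquiv_iff (hK : 0 < K) :
    SeqEquiv K k x y ↔ ∀ a : ℕ → ℝ,
      ‖∑ i ∈ Finset.range k, a i • x i‖ ≤ K * ‖∑ i ∈ Finset.range k, a i • y i‖ ∧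
      ‖∑ i ∈ Finset.range k, a i • y i‖ ≤ K * ‖∑ i ∈ Finset.range k, a i • x i‖ := by
  simp only [SeqEquiv, one_div, inv_mul_le_iff₀ hK]

theorem SeqEquiv.trans (hK : 0 < K) (hL : 0 < L) (hxy : SeqEquiv K k x y)
    (hyz : SeqEquiv L k y z) : SeqEquiv (K * L) k x z := by
  rw [seqEquiv_iff hK] at hxy
  rw [seqEquiv_iff hL] at hyz
  refine (seqEquiv_iff (mul_pos hK hL)).2 fun a => ⟨?_, ?_⟩
  · rw [mul_assoc]
    exact (hxy a).1.trans (by gcongr; exact (hyz a).1)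
  · rw [mul_comm K, mul_assoc]
    exact (hyz a).2.trans (by gcongr; exact (hxy a).2)

theorem SeqEquiv.mono (hK : 0 < K) (hKL : K ≤ L) (h : SeqEquiv K k x y) : SeqEquiv L k x y := by
  rw [seqEquiv_iff hK] at h
  exact (seqEquiv_iff (hK.trans_le hKL)).2 fun a =>
    ⟨(h a).1.trans (by gcongr), (h a).2.trans (by gcongr)⟩

/-- The partial sum projections along `y` have norm at most `C` on finite linear combinations:
`y` is a basic sequence with basis constant `C`. -/
def HasBasisConstant (C : ℝ) (y : ℕ → 𝒲) : Prop :=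
  ∀ (a : ℕ → ℝ) {m k : ℕ}, m ≤ k →
    ‖∑ i ∈ Finset.range m, a i • y i‖ ≤ C * ‖∑ i ∈ Finset.range k, a i • y i‖

namespace HasBasisConstant

theorem norm_smul_le (hy : HasBasisConstant C y) (a : ℕ → ℝ) {i : ℕ} (hi : i < k) :
    ‖a i • y i‖ ≤ 2 * C * ‖∑ j ∈ Finset.range k, a j • y j‖ :=
  calc ‖a i • y i‖
      = ‖∑ j ∈ Finset.range (i + 1), a j • y j - ∑ j ∈ Finset.range i, a j • y j‖ := by
        rw [Finset.sum_range_succ, add_sub_cancel_left]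
    _ ≤ ‖∑ j ∈ Finset.range (i + 1), a j • y j‖ + ‖∑ j ∈ Finset.range i, a j • y j‖ :=
        norm_sub_le _ _
    _ ≤ C * ‖∑ j ∈ Finset.range k, a j • y j‖ + C * ‖∑ j ∈ Finset.range k, a j • y j‖ :=
        add_le_add (hy a hi) (hy a hi.le)
    _ = 2 * C * ‖∑ j ∈ Finset.range k, a j • y j‖ := by ring

theorem norm_sum_smul_sub_le (hy : HasBasisConstant C y) (hlt : ∀ i < m, ‖x i‖ ≤ ‖y i‖)
    (hge : ∀ i ≥ m, x i = y i) (a : ℕ → ℝ) (k : ℕ) :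
    ‖∑ i ∈ Finset.range k, a i • (x i - y i)‖ ≤
      4 * C * m * ‖∑ i ∈ Finset.range k, a i • y i‖ := by
  set S := ‖∑ i ∈ Finset.range k, a i • y i‖
  have hCS : 0 ≤ C * S := (norm_nonneg _).trans (hy a k.zero_le)
  have hterm : ∀ i ∈ (Finset.range k).filter (· < m), ‖a i • (x i - y i)‖ ≤ 4 * (C * S) := by
    intro i hi
    obtain ⟨hik, him⟩ := Finset.mem_filter.1 hi
    have hyi : ‖a i • y i‖ ≤ 2 * C * S := hy.norm_smul_le a (Finset.mem_range.1 hik)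
    have hxi : ‖a i • x i‖ ≤ ‖a i • y i‖ := by
      rw [norm_smul, norm_smul]
      exact mul_le_mul_of_nonneg_left (hlt i him) (norm_nonneg _)
    rw [smul_sub]
    linarith [norm_sub_le (a i • x i) (a i • y i)]
  have hcard : ((Finset.range k).filter (· < m)).card ≤ m := by
    simpa using Finset.card_le_card (t := Finset.range m) fun i hi =>
      Finset.mem_range.2 (Finset.mem_filter.1 hi).2
  rw [← Finset.sum_filter_of_ne (p := (· < m)) fun i _ hi => by
    contrapose! hi; rw [hge i hi, sub_self, smul_zero]]
  calc _ ≤ ((Finset.range k).filter (· < m)).card • (4 * (C * S)) :=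
        (norm_sum_le _ _).trans (Finset.sum_le_card_nsmul _ _ _ hterm)
    _ ≤ m * (4 * (C * S)) := by rw [nsmul_eq_mul]; gcongr
    _ = 4 * C * m * S := by ring

theorem norm_sum_smul_le (hy : HasBasisConstant C y) (hlt : ∀ i < m, ‖x i‖ ≤ ‖y i‖)
    (hge : ∀ i ≥ m, x i = y i) (a : ℕ → ℝ) (k : ℕ) :
    ‖∑ i ∈ Finset.range k, a i • x i‖ ≤
      (1 + 4 * C * m) * ‖∑ i ∈ Finset.range k, a i • y i‖ := by
  have hsplit : ∑ i ∈ Finset.range k, a i • x i =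
      ∑ i ∈ Finset.range k, a i • y i + ∑ i ∈ Finset.range k, a i • (x i - y i) := by
    simp only [smul_sub, Finset.sum_sub_distrib, add_sub_cancel]
  rw [hsplit, one_add_mul]
  exact (norm_add_le _ _).trans (add_le_add_right (hy.norm_sum_smul_sub_le hlt hge a k) _)

theorem seqEquiv (hC : 0 ≤ C) (hx : HasBasisConstant C x) (hy : HasBasisConstant C y)
    (hlt : ∀ i < m, ‖x i‖ = ‖y i‖) (hge : ∀ i ≥ m, x i = y i) (k : ℕ) :
    SeqEquiv (1 + 4 * C * m) k x y :=
  (seqEquiv_iff (by positivity)).2 fun a =>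
    ⟨hy.norm_sum_smul_le (fun i hi => (hlt i hi).le) hge a k,
      hx.norm_sum_smul_le (fun i hi => (hlt i hi).ge) (fun i hi => (hge i hi).symm) a k⟩

end HasBasisConstant

end SeqEquiv

namespace Frame

variable {𝒲 : Type} [NormedAddCommGroup 𝒲] [NormedSpace ℝ 𝒲] (ctx : Frame 𝒲)

theorem fspan_eq_span (S : Set 𝒲) : ctx.fspan S = (Submodule.span ctx.𝔽 S : Set 𝒲) := by
  ext v
  constructor
  · rintro ⟨t, ht, c, hc, rfl⟩
    exact Submodule.sum_mem _ fun w hw =>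
      Submodule.smul_mem _ (⟨c w, hc w⟩ : ctx.𝔽) (Submodule.subset_span (ht hw))
  · intro hv
    obtain ⟨c, hc, rfl⟩ := Submodule.mem_span_set.1 hv
    exact ⟨c.support, hc, fun w => (c w : ℝ), fun w => (c w).2, rfl⟩

variable {S T : Set 𝒲}

theorem subset_fspan : S ⊆ ctx.fspan S := by
  rw [fspan_eq_span]
  exact Submodule.subset_span

variable {ctx}

theorem fspan_subset_fspan (h : S ⊆ ctx.fspan T) : ctx.fspan S ⊆ ctx.fspan T := by
  rw [fspan_eq_span] at h
  rw [fspan_eq_span, fspan_eq_span]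
  exact Submodule.span_le.2 h

theorem smul_mem_fspan {c : ℝ} {x : 𝒲} (hc : c ∈ ctx.𝔽) (hx : x ∈ ctx.fspan S) :
    c • x ∈ ctx.fspan S := by
  rw [fspan_eq_span] at hx ⊢
  exact Submodule.smul_mem _ (⟨c, hc⟩ : ctx.𝔽) hx

theorem mem_fspan_range_iff {b : ℕ → 𝒲} {x : 𝒲} :
    x ∈ ctx.fspan (Set.range b) ↔
      ∃ c : ℕ →₀ ctx.𝔽, ∑ i ∈ c.support, (c i : ℝ) • b i = x := by
  rw [fspan_eq_span]
  exact Finsupp.mem_span_range_iff_exists_finsupp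

theorem norm_mem_of_mem_W {x : 𝒲} (hx : x ∈ ctx.W) : ‖x‖ ∈ ctx.𝔽 := by
  obtain ⟨c, rfl⟩ := mem_fspan_range_iff.1 hx
  exact ctx.norm_mem _ _ fun i _ => (c i).2

variable (ctx)

/-- The basis `(e n)` as a `SchauderBasis`, which provides the coordinate functionals and the
partial sum projections. -/
noncomputable def schauderBasis : SchauderBasis ℝ 𝒲 :=
  haveI := ctx.complete
  ctx.basis.toSchauderBasis

theorem exists_norm_proj_le : ∃ C : ℝ, ∀ n, ‖ctx.schauderBasis.proj n‖ ≤ C :=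
  haveI := ctx.complete
  SchauderBasis.exists_norm_proj_le _

/-- The support of a vector over the basis `(e n)`; it is finite for vectors of `W`. -/
def supp (x : 𝒲) : Set ℕ := {i | ctx.schauderBasis.coord i x ≠ 0}

/-- The first element of the support of a nonzero vector; junk value `0` at `x = 0`. -/
noncomputable def minSupp (x : 𝒲) : ℕ := sInf (ctx.supp x)

/-- The relation `x < y` of the paper between (finitely supported) vectors: the support of `x`
lies entirely before that of `y`. -/
def BlockLT (x y : 𝒲) : Prop := ∀ i ∈ ctx.supp x, ∀ j ∈ ctx.supp y, i < j

variable {ctx} {x : 𝒲} {c : ℝ}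

theorem mem_supp {i : ℕ} : i ∈ ctx.supp x ↔ ctx.schauderBasis.coord i x ≠ 0 := Iff.rfl

theorem supp_basis (j : ℕ) : ctx.supp (ctx.e j) = {j} := by
  ext i
  change ctx.basis.coeff (ctx.e j) i ≠ 0 ↔ i = j
  rw [ctx.basis.coeff_basis, Pi.single_apply, ne_eq, ite_eq_right_iff]
  simp only [one_ne_zero, imp_false, not_not]

theorem supp_smul (hc : c ≠ 0) : ctx.supp (c • x) = ctx.supp x := by
  ext i
  simp only [mem_supp, map_smul, smul_eq_mul, ne_eq, mul_eq_zero, hc, false_or]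

theorem supp_subset_of_mem_fspan {A : Set ℕ} (hS : ∀ v ∈ S, ctx.supp v ⊆ A)
    (hx : x ∈ ctx.fspan S) : ctx.supp x ⊆ A := by
  obtain ⟨t, ht, c, -, rfl⟩ := hx
  intro i hi
  by_contra hiA
  refine hi ?_
  rw [map_sum]
  refine Finset.sum_eq_zero fun v hv => ?_
  rw [map_smul, not_not.1 fun hne => hiA (hS v (ht hv) hne), smul_zero]

theorem sum_coord_smul {s : Finset ℕ} (hs : ctx.supp x ⊆ s) :
    ∑ i ∈ s, ctx.schauderBasis.coord i x • ctx.e i = x := by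
  refine (hasSum_sum_of_ne_finset_zero (L := SummationFilter.conditional ℕ) fun i hi => ?_).unique
    (ctx.schauderBasis.expansion x)
  rw [not_not.1 fun hne => hi (hs hne), zero_smul]

theorem suppIn_iff {s : Finset ℕ} : SuppIn ctx.e x s ↔ ctx.supp x ⊆ s := by
  refine ⟨?_, fun hs => ⟨_, (sum_coord_smul hs).symm⟩⟩
  rintro ⟨a, rfl⟩ i hi
  rw [mem_supp, map_sum] at hi
  obtain ⟨j, hj, hij⟩ := Finset.exists_ne_zero_of_sum_ne_zero hi
  rw [map_smul, smul_eq_mul] at hij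
  have : i ∈ ctx.supp (ctx.e j) := right_ne_zero_of_mul hij
  rw [supp_basis] at this
  exact this ▸ hj

theorem finite_supp (hx : x ∈ ctx.W) : (ctx.supp x).Finite := by
  obtain ⟨c, rfl⟩ := mem_fspan_range_iff.1 hx
  exact c.support.finite_toSet.subset (suppIn_iff.1 ⟨_, rfl⟩)

theorem supp_nonempty (hx : x ≠ 0) : (ctx.supp x).Nonempty := by
  contrapose! hx
  rw [← sum_coord_smul (ctx := ctx) (x := x) (s := ∅) (by simp [hx]), Finset.sum_empty]

theorem minSupp_mem_supp (hx : x ≠ 0) : ctx.minSupp x ∈ ctx.supp x :=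
  Nat.sInf_mem (supp_nonempty hx)

theorem minSupp_le {i : ℕ} (hi : i ∈ ctx.supp x) : ctx.minSupp x ≤ i := Nat.sInf_le hi

theorem proj_eq_self {n : ℕ} (hx : ∀ i ∈ ctx.supp x, i < n) : ctx.schauderBasis.proj n x = x := by
  rw [SchauderBasis.proj_apply]
  exact sum_coord_smul fun i hi => Finset.mem_coe.2 (Finset.mem_range.2 (hx i hi))

theorem proj_eq_zero {n : ℕ} (hx : ∀ i ∈ ctx.supp x, n ≤ i) : ctx.schauderBasis.proj n x = 0 := by
  rw [SchauderBasis.proj_apply]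
  refine Finset.sum_eq_zero fun i hi => ?_
  rw [not_not.1 fun hne => (hx i hne).not_gt (Finset.mem_range.1 hi), zero_smul]

variable {y z : ℕ → 𝒲}

theorem isBlockSeq_iff : ctx.IsBlockSeq y ↔
    (∀ n, y n ∈ ctx.W) ∧ (∀ n, y n ≠ 0) ∧ ∀ n, ctx.BlockLT (y n) (y (n + 1)) := by
  refine and_congr_right fun hW => and_congr_right fun _ => ?_
  simp only [suppIn_iff]
  constructor
  · rintro ⟨D, hD, hlt⟩ n i hi j hj
    exact hlt n i (hD n hi) j (hD (n + 1) hj)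
  · intro hlt
    refine ⟨fun n => (finite_supp (hW n)).toFinset, fun n => by simp, fun n i hi j hj => ?_⟩
    exact hlt n i (by simpa using hi) j (by simpa using hj)

variable (ctx) in
theorem isBlockSeq_basis : ctx.IsBlockSeq ctx.e :=
  isBlockSeq_iff.2 ⟨fun n => ctx.subset_fspan ⟨n, rfl⟩, fun n => ctx.basis.ne_zero n, fun n => by
    simp only [BlockLT, supp_basis, Set.mem_singleton_iff, forall_eq, Nat.lt_succ_self]⟩

namespace IsBlockSeq

theorem mem_W (hy : ctx.IsBlockSeq y) (n : ℕ) : y n ∈ ctx.W := hy.1 n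

theorem ne_zero (hy : ctx.IsBlockSeq y) (n : ℕ) : y n ≠ 0 := hy.2.1 n

theorem isBlockSubspace (hy : ctx.IsBlockSeq y) : ctx.IsBlockSubspace (ctx.fspan (Set.range y)) :=
  ⟨y, hy, hy.mem_W, rfl⟩

theorem blockLT (hy : ctx.IsBlockSeq y) {m n : ℕ} (hmn : m < n) : ctx.BlockLT (y m) (y n) := by
  have hsucc := (isBlockSeq_iff.1 hy).2.2
  induction n, hmn using Nat.le_induction with
  | base => exact hsucc m
  | succ n _ ih =>
    obtain ⟨k, hk⟩ := supp_nonempty (ctx := ctx) (hy.ne_zero n)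
    exact fun i hi j hj => (ih i hi k hk).trans (hsucc n k hk j hj)

theorem minSupp_mem (hy : ctx.IsBlockSeq y) (n : ℕ) : ctx.minSupp (y n) ∈ ctx.supp (y n) :=
  minSupp_mem_supp (hy.ne_zero n)

theorem strictMono_minSupp (hy : ctx.IsBlockSeq y) : StrictMono fun n => ctx.minSupp (y n) :=
  fun _ _ hmn => hy.blockLT hmn _ (hy.minSupp_mem _) _ (hy.minSupp_mem _)

theorem minSupp_le_of_mem_supp (hy : ctx.IsBlockSeq y) {m n i : ℕ} (hmn : m ≤ n)
    (hi : i ∈ ctx.supp (y n)) : ctx.minSupp (y m) ≤ i :=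
  (hy.strictMono_minSupp.monotone hmn).trans (minSupp_le hi)

theorem eq_of_minSupp_mem_supp (hy : ctx.IsBlockSeq y) {m n : ℕ}
    (h : ctx.minSupp (y m) ∈ ctx.supp (y n)) : m = n := by
  rcases lt_trichotomy m n with hmn | rfl | hnm
  · exact (lt_irrefl _ (hy.blockLT hmn _ (hy.minSupp_mem m) _ h)).elim
  · rfl
  · exact (lt_irrefl _ (hy.blockLT hnm _ h _ (hy.minSupp_mem m))).elim

theorem smul (hy : ctx.IsBlockSeq y) {c : ℕ → ℝ} (hc : ∀ n, c n ∈ ctx.𝔽) (hc0 : ∀ n, c n ≠ 0) :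
    ctx.IsBlockSeq fun n => c n • y n :=
  isBlockSeq_iff.2 ⟨fun n => smul_mem_fspan (hc n) (hy.mem_W n),
    fun n => smul_ne_zero (hc0 n) (hy.ne_zero n), fun n => by
      simpa only [BlockLT, supp_smul (hc0 _)] using hy.blockLT n.lt_succ_self⟩

theorem ite_lt (hy : ctx.IsBlockSeq y) (hz : ctx.IsBlockSeq z) {n : ℕ}
    (hyz : ∀ i < n, ctx.BlockLT (y i) (z n)) :
    ctx.IsBlockSeq fun i => if i < n then y i else z i := by
  refine isBlockSeq_iff.2 ⟨fun i => ?_, fun i => ?_, fun i => ?_⟩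
  · split_ifs; exacts [hy.mem_W i, hz.mem_W i]
  · split_ifs; exacts [hy.ne_zero i, hz.ne_zero i]
  · rcases lt_trichotomy (i + 1) n with hi | rfl | hi
    · simpa only [hi, i.lt_succ_self.trans hi, if_true] using hy.blockLT i.lt_succ_self
    · simpa only [i.lt_succ_self, lt_irrefl, if_true, if_false] using hyz i i.lt_succ_self
    · simpa only [hi.not_gt, (Nat.le_of_lt_succ hi).not_gt, if_false] using
        hz.blockLT i.lt_succ_self

theorem mem_fspan_image (hz : ctx.IsBlockSeq z) (hx : x ∈ ctx.fspan (Set.range z)) :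
    x ∈ ctx.fspan (z '' {j | ctx.minSupp (z j) ∈ ctx.supp x}) := by
  obtain ⟨c, rfl⟩ := mem_fspan_range_iff.1 hx
  rw [fspan_eq_span]
  refine Submodule.sum_mem _ fun j hj =>
    Submodule.smul_mem _ (c j) (Submodule.subset_span (Set.mem_image_of_mem z ?_))
  rw [Set.mem_ofPred_eq, mem_supp, map_sum, Finset.sum_eq_single_of_mem j hj, map_smul]
  · exact smul_ne_zero (by simpa using hj) (hz.minSupp_mem j)
  · intro i _ hij
    rw [map_smul, not_not.1 fun hne => hij (hz.eq_of_minSupp_mem_supp hne).symm, smul_zero]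

theorem mem_fspan_image_Ici (hz : ctx.IsBlockSeq z) (hy : ctx.IsBlockSeq y)
    (hyz : ∀ n, y n ∈ ctx.fspan (Set.range z)) (n : ℕ) :
    y n ∈ ctx.fspan (z '' Set.Ici n) := by
  let J (n : ℕ) : Set ℕ := {j | ctx.minSupp (z j) ∈ ctx.supp (y n)}
  have hJ (n : ℕ) : y n ∈ ctx.fspan (z '' J n) := hz.mem_fspan_image (hyz n)
  have hne (n : ℕ) : (J n).Nonempty := by
    by_contra! hempty
    refine hy.ne_zero n ?_
    simpa [hempty, fspan_eq_span] using hJ n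
  have hle (n : ℕ) : ∀ j ∈ J n, n ≤ j := by
    induction n with
    | zero => exact fun j _ => j.zero_le
    | succ n ih =>
      obtain ⟨i, hi⟩ := hne n
      intro j hj
      have hij : i < j :=
        hz.strictMono_minSupp.lt_iff_lt.1 (hy.blockLT n.lt_succ_self _ hi _ hj)
      exact (ih i hi).trans_lt hij
  exact fspan_subset_fspan ((Set.image_mono (hle n)).trans ctx.subset_fspan) (hJ n)

theorem minSupp_le_of_mem_fspan_image_Ici (hz : ctx.IsBlockSeq z) {n i : ℕ}
    (hx : x ∈ ctx.fspan (z '' Set.Ici n)) (hi : i ∈ ctx.supp x) : ctx.minSupp (z n) ≤ i := by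
  refine supp_subset_of_mem_fspan (A := Set.Ici (ctx.minSupp (z n))) ?_ hx hi
  rintro _ ⟨j, hj, rfl⟩ r hr
  exact hz.minSupp_le_of_mem_supp hj hr

theorem proj_sum (hy : ctx.IsBlockSeq y) (a : ℕ → ℝ) {m k : ℕ} (hmk : m ≤ k) :
    ctx.schauderBasis.proj (ctx.minSupp (y m)) (∑ i ∈ Finset.range k, a i • y i) =
      ∑ i ∈ Finset.range m, a i • y i := by
  rw [map_sum, ← Finset.sum_range_add_sum_Ico _ hmk]
  rw [Finset.sum_eq_zero (s := Finset.Ico m k), add_zero]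
  · refine Finset.sum_congr rfl fun i hi => ?_
    rw [map_smul, proj_eq_self fun j hj =>
      hy.blockLT (Finset.mem_range.1 hi) j hj _ (hy.minSupp_mem m)]
  · intro i hi
    rw [map_smul, proj_eq_zero fun j hj =>
      hy.minSupp_le_of_mem_supp (Finset.mem_Ico.1 hi).1 hj, smul_zero]

end IsBlockSeq

variable (ctx) in
theorem exists_hasBasisConstant :
    ∃ C : ℝ, 0 ≤ C ∧ ∀ y, ctx.IsBlockSeq y → HasBasisConstant C y := by
  obtain ⟨C, hC⟩ := ctx.exists_norm_proj_le
  refine ⟨C, (norm_nonneg _).trans (hC 0), fun y hy a m k hmk => ?_⟩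
  rw [← hy.proj_sum a hmk]
  exact ContinuousLinearMap.le_of_opNorm_le _ (hC _) _

theorem exists_isBlockSeq_diagonal {b : ℕ → ℕ → 𝒲} (hb : ∀ n, ctx.IsBlockSeq (b n)) :
    ∃ k : ℕ → ℕ, (∀ n, n ≤ k n) ∧ ctx.IsBlockSeq fun n => b n (k n) := by
  let k : ℕ → ℕ := fun n => n.rec 0 fun n kn => max (n + 1) (ctx.minSupp (b n (kn + 1)))
  have hk (n : ℕ) : n ≤ k n := by
    cases n with
    | zero => exact Nat.zero_le _
    | succ n => exact le_max_left _ _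
  refine ⟨k, hk, isBlockSeq_iff.2 ⟨fun n => (hb n).mem_W _, fun n => (hb n).ne_zero _, ?_⟩⟩
  intro n i hi j hj
  calc i < ctx.minSupp (b n (k n + 1)) :=
        (hb n).blockLT (k n).lt_succ_self i hi _ ((hb n).minSupp_mem _)
    _ ≤ k (n + 1) := le_max_right _ _
    _ ≤ ctx.minSupp (b (n + 1) (k (n + 1))) := (hb (n + 1)).strictMono_minSupp.le_apply
    _ ≤ j := minSupp_le hj

theorem exists_fusion {P : ℕ → Set 𝒲 → Prop}
    (hP : ∀ n Y, ctx.IsBlockSubspace Y → ∃ X, ctx.IsBlockSubspaceOf X Y ∧ P n X) :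
    ∃ (b : ℕ → ℕ → 𝒲) (z : ℕ → 𝒲), ctx.IsBlockSeq z ∧ ∀ n, ctx.IsBlockSeq (b n) ∧
      P n (ctx.fspan (Set.range (b n))) ∧ (∀ j ≥ n, z j ∈ ctx.fspan (Set.range (b n))) ∧
      ∀ i < n, ctx.BlockLT (b n i) (z n) := by
  have hstep (n : ℕ) (y : {y // ctx.IsBlockSeq y}) : ∃ b : {b // ctx.IsBlockSeq b},
      ctx.fspan (Set.range b.1) ⊆ ctx.fspan (Set.range y.1) ∧
        P n (ctx.fspan (Set.range b.1)) := by
    obtain ⟨_, ⟨b, hb, hby, rfl⟩, hPb⟩ := hP n _ y.2.isBlockSubspace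
    exact ⟨⟨b, hb⟩, fspan_subset_fspan (Set.range_subset_iff.2 hby), hPb⟩
  choose next hnext hPnext using hstep
  let B : ℕ → {y // ctx.IsBlockSeq y} := fun n => n.rec ⟨ctx.e, ctx.isBlockSeq_basis⟩ next
  have hanti : Antitone fun n => ctx.fspan (Set.range (B n).1) :=
    antitone_nat_of_succ_le fun n => hnext n (B n)
  obtain ⟨k, hk, hz⟩ := exists_isBlockSeq_diagonal fun n => (B (n + 1)).2
  refine ⟨fun n => (B (n + 1)).1, _, hz, fun n => ⟨(B (n + 1)).2, hPnext n (B n), ?_, ?_⟩⟩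
  · exact fun j hj => hanti (Nat.succ_le_succ hj) (ctx.subset_fspan ⟨k j, rfl⟩)
  · exact fun i hi => (B (n + 1)).2.blockLT (hi.trans_le (hk n))

/-- Rescaling `b i` to the norm of `y i` stays inside `W`, since `𝔽` contains all the norms. -/
theorem IsBlockSeq.exists_replace_initial {b : ℕ → 𝒲} {n : ℕ} (hb : ctx.IsBlockSeq b)
    (hz : ctx.IsBlockSeq z) (hzb : ∀ j ≥ n, z j ∈ ctx.fspan (Set.range b))
    (hbz : ∀ i < n, ctx.BlockLT (b i) (z n)) (hy : ctx.IsBlockSeq y)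
    (hyz : ∀ i, y i ∈ ctx.fspan (Set.range z)) :
    ∃ x, ctx.IsBlockSeq x ∧ (∀ i, x i ∈ ctx.fspan (Set.range b)) ∧
      (∀ i < n, ‖x i‖ = ‖y i‖) ∧ ∀ i ≥ n, x i = y i := by
  let c (i : ℕ) : ℝ := ‖y i‖ / ‖b i‖
  have hc (i : ℕ) : c i ∈ ctx.𝔽 :=
    ctx.𝔽.div_mem (norm_mem_of_mem_W (hy.mem_W i)) (norm_mem_of_mem_W (hb.mem_W i))
  have hc0 (i : ℕ) : c i ≠ 0 :=
    div_ne_zero (norm_ne_zero_iff.2 (hy.ne_zero i)) (norm_ne_zero_iff.2 (hb.ne_zero i))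
  have htail (i : ℕ) (hi : n ≤ i) : y i ∈ ctx.fspan (z '' Set.Ici n) :=
    fspan_subset_fspan ((Set.image_mono (Set.Ici_subset_Ici.2 hi)).trans ctx.subset_fspan)
      (hz.mem_fspan_image_Ici hy hyz i)
  have hlt (i : ℕ) (hi : i < n) : ctx.BlockLT (c i • b i) (y n) := by
    intro p hp q hq
    rw [supp_smul (hc0 i)] at hp
    exact (hbz i hi p hp _ (hz.minSupp_mem n)).trans_le
      (hz.minSupp_le_of_mem_fspan_image_Ici (htail n le_rfl) hq)
  refine ⟨_, (hb.smul hc hc0).ite_lt hy hlt, fun i => ?_, fun i hi => ?_, fun i hi => ?_⟩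
  · split_ifs with hi
    · exact smul_mem_fspan (hc i) (ctx.subset_fspan ⟨i, rfl⟩)
    · refine fspan_subset_fspan ?_ (htail i (not_lt.1 hi))
      rintro _ ⟨j, hj, rfl⟩
      exact hzb j hj
  · rw [if_pos hi, norm_smul, Real.norm_of_nonneg (by positivity),
      div_mul_cancel₀ _ (norm_ne_zero_iff.2 (hb.ne_zero i))]
  · exact if_neg hi.not_gt

theorem NatLt.mono {m n : ℕ} {F : Set 𝒲} (hF : ctx.NatLt n F) (hmn : m ≤ n) : ctx.NatLt m F :=
  fun x hx => (hF x hx).imp fun _ hs => ⟨hs.1, fun i hi => hmn.trans_lt (hs.2 i hi)⟩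

theorem IsBlockSeq.mem_fspan_of_natLt (hz : ctx.IsBlockSeq z) {n : ℕ}
    (hX : ∀ j ≥ n, z j ∈ ctx.fspan T) (hx : x ∈ ctx.fspan (Set.range z))
    (hlt : ctx.NatLt (ctx.minSupp (z n)) {x}) : x ∈ ctx.fspan T := by
  obtain ⟨s, hs, hns⟩ := hlt x rfl
  refine fspan_subset_fspan ?_ (hz.mem_fspan_image hx)
  rintro _ ⟨j, hj, rfl⟩
  exact hX j (hz.strictMono_minSupp.lt_iff_lt.1 (hns _ (suppIn_iff.1 hs hj))).le

section Game

variable {X X' : Set 𝒲} {A A' : Set (List 𝒲)} {β : Ordinal}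

theorem iiWinsF_iff {Facc : Set 𝒲} {vec : List 𝒲} :
    ctx.IIWinsF X A β Facc vec ↔ ∀ n : ℕ, ∀ ξ : Ordinal, ξ < β →
      ∃ F : Set 𝒲, ctx.IsFinDimIn F X ∧ ctx.NatLt n F ∧
        ∃ x : 𝒲, x ≠ 0 ∧ x ∈ ctx.fspan (Facc ∪ F) ∧
          (ξ = 0 → vec ++ [x] ∈ A) ∧
          (ξ ≠ 0 → ctx.IIWinsF X A ξ (ctx.fspan (Facc ∪ F)) (vec ++ [x])) := by
  unfold IIWinsF
  rw [WellFounded.fix_eq]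

theorem IIWinsF.mono {M : ℕ} (hA : A ⊆ A') (hX : ∀ x ∈ X, ctx.NatLt M {x} → x ∈ X')
    {Facc : Set 𝒲} {vec : List 𝒲} (h : ctx.IIWinsF X A β Facc vec) :
    ctx.IIWinsF X' A' β Facc vec := by
  induction β using WellFoundedLT.induction generalizing Facc vec with
  | ind β ih =>
    rw [iiWinsF_iff] at h ⊢
    intro n ξ hξ
    -- II pretends that I has played at least `M`.
    obtain ⟨F, ⟨t, htX, rfl⟩, hF, x, hx0, hx, hend, hcont⟩ := h (max n M) ξ hξ
    have htX' : ↑t ⊆ X' := fun v hv => hX v (htX hv) fun w hw =>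
      hF.mono (le_max_right n M) w (Set.mem_singleton_iff.1 hw ▸ ctx.subset_fspan hv)
    exact ⟨_, ⟨t, htX', rfl⟩, hF.mono (le_max_left n M), x, hx0, hx,
      fun hξ0 => hA (hend hξ0), fun hξ0 => ih ξ hξ (hcont hξ0)⟩

theorem IIStratF.mono {M : ℕ} (hA : A ⊆ A') (hX : ∀ x ∈ X, ctx.NatLt M {x} → x ∈ X')
    (h : ctx.IIStratF X β A) : ctx.IIStratF X' β A' :=
  ⟨fun hβ => hA (h.1 hβ), fun hβ => (h.2 hβ).mono hA hX⟩

end Game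

end Frame

theorem uniformity_general
    {𝒲 : Type} [NormedAddCommGroup 𝒲] [NormedSpace ℝ 𝒲] (ctx : Frame 𝒲) (β : Ordinal)
    (h : ∀ X : Set 𝒲, ctx.IsBlockSubspace X →
      ∃ K : ℝ, 1 ≤ K ∧ ∃ y : ℕ → 𝒲, ctx.IsBlockSeq y ∧ (∀ n, y n ∈ X) ∧
        ctx.IIStratF X β {l | OutcomeEquiv K l y}) :
    ∃ K : ℝ, 1 ≤ K ∧ ∃ Y : Set 𝒲, ctx.IsBlockSubspace Y ∧
      ∀ X : Set 𝒲, ctx.IsBlockSubspaceOf X Y →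
        ∃ y : ℕ → 𝒲, ctx.IsBlockSeq y ∧ (∀ n, y n ∈ X) ∧
          ctx.IIStratF X β {l | OutcomeEquiv K l y} := by
  obtain ⟨C, hC0, hC⟩ := ctx.exists_hasBasisConstant
  by_contra! hfail
  let K' (n : ℕ) : ℝ := (n + 1) * (1 + 4 * C * n)
  have hK' (n : ℕ) : 1 ≤ K' n :=
    one_le_mul_of_one_le_of_one_le (by simp) (le_add_of_nonneg_right (by positivity))
  obtain ⟨b, z, hz, hbz⟩ := Frame.exists_fusion fun n Y => hfail (K' n) (hK' n) Y
  obtain ⟨K, hK, y, hy, hyz, hwin⟩ := h _ hz.isBlockSubspace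
  obtain ⟨n, hKn⟩ := exists_nat_ge K
  obtain ⟨hb, hlose, hzb, hlt⟩ := hbz n
  obtain ⟨x, hx, hxb, hnorm, htail⟩ := hb.exists_replace_initial hz hzb hlt hy hyz
  refine hlose x hx hxb (hwin.mono (fun l hl => ?_) fun v => hz.mem_fspan_of_natLt hzb)
  have hyx : SeqEquiv (1 + 4 * C * n) l.length y x :=
    (hC y hy).seqEquiv hC0 (hC x hx) (fun i hi => (hnorm i hi).symm)
      (fun i hi => (htail i hi).symm) _
  have hK0 : 0 < K := one_pos.trans_le hK
  have hKK' : K * (1 + 4 * C * n) ≤ K' n :=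
    mul_le_mul_of_nonneg_right (hKn.trans (by simp)) (by positivity)
  exact (hl.trans hK0 (by positivity) hyx).mono (by positivity) hKK'

/-- uniformity lemma.  If for every block subspace `X ⊆ W` there are
`K ≥ 1` and a block sequence `(y n)` in `X` such that II has a strategy in `F^β_X` to play
outcomes `K`-equivalent to `(y n)`, then the constant `K` can be chosen uniformly on all
block subspaces of some block subspace `Y ⊆ W`. -/
theorem uniformity
    (𝒲 : Type) [NormedAddCommGroup 𝒲] [NormedSpace ℝ 𝒲] (ctx : Frame 𝒲)
    (β : Ordinal) (hβ : β < (Cardinal.aleph 1).ord)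
    (h : ∀ X : Set 𝒲, ctx.IsBlockSubspace X →
      ∃ K : ℝ, 1 ≤ K ∧ ∃ y : ℕ → 𝒲, ctx.IsBlockSeq y ∧ (∀ n, y n ∈ X) ∧
        ctx.IIStratF X β {l | OutcomeEquiv K l y}) :
    ∃ K : ℝ, 1 ≤ K ∧ ∃ Y : Set 𝒲, ctx.IsBlockSubspace Y ∧
      ∀ X : Set 𝒲, ctx.IsBlockSubspaceOf X Y →
        ∃ y : ℕ → 𝒲, ctx.IsBlockSeq y ∧ (∀ n, y n ∈ X) ∧
          ctx.IIStratF X β {l | OutcomeEquiv K l y} := by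
  exact uniformity_general ctx β h

end Rosendal
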